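/- arXiv:1804.10778 — 2 statements merged into one kernel-verified Lean document; each statement's English description precedes it below -/
import Mathlib

section
/- Fix path data θ_p, φ_p, ρ_p ∈ ℝ for p ∈ {1,…,P}, an orientation ω ∈ ℝ, a constant c > 0, and a center (x₀, y₀) ∈ ℝ². The feasible set of the box-minimization problem with fixed orientation ω, namely the set of tuples (d₁, ℓ, w, (ν_p)_{p=1}^P) ∈ ℝ × ℝ × ℝ × ℝ^P such that, for every p, 0 < ν_p < d₁ + c·ρ_p, |cos(ω)(x_p(ν_p,d₁) − x₀) + sin(ω)(y_p(ν_p,d₁) − y₀)| ≤ ℓ/2, and |−sin(ω)(x_p(ν_p,d₁) − x₀) + cos(ω)(y_p(ν_p,d₁) − y₀)| ≤ w/2, is a convex subset of ℝ^{P+3}. -/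
/-- `x`-coordinate of the origin of a path with AoA `θ`, AoD `φ`, TDoA `ρ`,
orientation `ω`, post-reflection distance `ν` and first-path distance `d₁`. -/
noncomputable def pathX (c ω θ φ ρ ν d₁ : ℝ) : ℝ :=
  ν * Real.cos θ - (d₁ + c * ρ - ν) * Real.cos (φ + ω)

/-- `y`-coordinate of the origin of a path. -/
noncomputable def pathY (c ω θ φ ρ ν d₁ : ℝ) : ℝ :=
  ν * Real.sin θ - (d₁ + c * ρ - ν) * Real.sin (φ + ω)

section AffineConstraints

theorem convex_setOf_affineMap_lt {𝕜 E β : Type*} [Ring 𝕜] [PartialOrder 𝕜] [AddCommGroup E]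
    [Module 𝕜 E] [AddCommGroup β] [PartialOrder β] [IsOrderedAddMonoid β] [Module 𝕜 β]
    [PosSMulStrictMono 𝕜 β] (f g : E →ᵃ[𝕜] β) : Convex 𝕜 {x | f x < g x} := by
  have h : Convex 𝕜 ((g - f) ⁻¹' Set.Ioi 0) := (convex_Ioi 0).affine_preimage (g - f)
  simpa only [Set.preimage, Set.mem_Ioi, AffineMap.coe_sub, Pi.sub_apply, sub_pos] using h

theorem convex_setOf_norm_affineMap_le {E F : Type*} [AddCommGroup E] [Module ℝ E]
    [SeminormedAddCommGroup F] [NormedSpace ℝ F] (f : E →ᵃ[ℝ] F) (g : E →ᵃ[ℝ] ℝ) :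
    Convex ℝ {x | ‖f x‖ ≤ g x} := by
  simpa using (convexOn_univ_norm (E := F)).convex_epigraph.affine_preimage (f.prod g)

end AffineConstraints

section PathGeometry

/-- The map sending `(ν, d₁)` to the path origin `(pathX, pathY)`, bundled as an affine map. -/
noncomputable def pathOrigin (c ω θ φ ρ : ℝ) : ℝ × ℝ →ᵃ[ℝ] ℝ × ℝ :=
  let ν : ℝ × ℝ →ᵃ[ℝ] ℝ := AffineMap.fst
  let preReflectionDist : ℝ × ℝ →ᵃ[ℝ] ℝ := AffineMap.snd + AffineMap.const ℝ _ (c * ρ) - ν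
  (Real.cos θ • ν - Real.cos (φ + ω) • preReflectionDist).prod
    (Real.sin θ • ν - Real.sin (φ + ω) • preReflectionDist)

theorem pathOrigin_apply (c ω θ φ ρ ν d₁ : ℝ) :
    pathOrigin c ω θ φ ρ (ν, d₁) = (pathX c ω θ φ ρ ν d₁, pathY c ω θ φ ρ ν d₁) := by
  simp [pathOrigin, pathX, pathY, mul_comm]

/-- The sensing box `B((x₀, y₀), ω, ℓ, w)`: the rectangle with sides `ℓ` and `w` centred at
`(x₀, y₀)`, its `ℓ`-side pointing in the direction `(cos ω, sin ω)`. -/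
def sensingBox (x₀ y₀ ω ℓ w : ℝ) : Set (ℝ × ℝ) :=
  {q | |Real.cos ω * (q.1 - x₀) + Real.sin ω * (q.2 - y₀)| ≤ ℓ / 2 ∧
    |-Real.sin ω * (q.1 - x₀) + Real.cos ω * (q.2 - y₀)| ≤ w / 2}

variable {E : Type*} [AddCommGroup E] [Module ℝ E]

theorem convex_setOf_abs_linearCombination_le (α β x₀ y₀ : ℝ) (q : E →ᵃ[ℝ] ℝ × ℝ)
    (s : E →ᵃ[ℝ] ℝ) :
    Convex ℝ {t | |α * ((q t).1 - x₀) + β * ((q t).2 - y₀)| ≤ s t / 2} := by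
  let f : E →ᵃ[ℝ] ℝ :=
    α • (AffineMap.fst.comp q - AffineMap.const ℝ E x₀) +
      β • (AffineMap.snd.comp q - AffineMap.const ℝ E y₀)
  simpa [f, div_eq_inv_mul] using convex_setOf_norm_affineMap_le f ((2⁻¹ : ℝ) • s)

theorem convex_setOf_mem_sensingBox (x₀ y₀ ω : ℝ) (q : E →ᵃ[ℝ] ℝ × ℝ) (ℓ w : E →ᵃ[ℝ] ℝ) :
    Convex ℝ {t | q t ∈ sensingBox x₀ y₀ ω (ℓ t) (w t)} :=
  (convex_setOf_abs_linearCombination_le (Real.cos ω) (Real.sin ω) x₀ y₀ q ℓ).inter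
    (convex_setOf_abs_linearCombination_le (-Real.sin ω) (Real.cos ω) x₀ y₀ q w)

theorem convex_setOf_path_feasible (c ω θ φ ρ x₀ y₀ : ℝ) (d₁ ℓ w ν : E →ᵃ[ℝ] ℝ) :
    Convex ℝ {t | 0 < ν t ∧ ν t < d₁ t + c * ρ ∧
      pathOrigin c ω θ φ ρ (ν t, d₁ t) ∈ sensingBox x₀ y₀ ω (ℓ t) (w t)} := by
  have ν_pos : Convex ℝ {t | 0 < ν t} := convex_setOf_affineMap_lt 0 ν
  have ν_lt : Convex ℝ {t | ν t < d₁ t + c * ρ} :=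
    convex_setOf_affineMap_lt ν (d₁ + AffineMap.const ℝ E (c * ρ))
  have origin_mem := convex_setOf_mem_sensingBox x₀ y₀ ω
    ((pathOrigin c ω θ φ ρ).comp (ν.prod d₁)) ℓ w
  exact ν_pos.inter (ν_lt.inter origin_mem)

end PathGeometry

theorem boxMin_feasibleSet_convex_general {ι : Type*} (θ φ ρ : ι → ℝ) (ω c x₀ y₀ : ℝ) :
    Convex ℝ { t : ℝ × ℝ × ℝ × (ι → ℝ) |
      ∀ p : ι,
        0 < t.2.2.2 p ∧ t.2.2.2 p < t.1 + c * ρ p ∧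
        |Real.cos ω * (pathX c ω (θ p) (φ p) (ρ p) (t.2.2.2 p) t.1 - x₀) +
            Real.sin ω * (pathY c ω (θ p) (φ p) (ρ p) (t.2.2.2 p) t.1 - y₀)|
          ≤ t.2.1 / 2 ∧
        |-Real.sin ω * (pathX c ω (θ p) (φ p) (ρ p) (t.2.2.2 p) t.1 - x₀) +
            Real.cos ω * (pathY c ω (θ p) (φ p) (ρ p) (t.2.2.2 p) t.1 - y₀)|
          ≤ t.2.2.1 / 2 } := by
  let d₁ : ℝ × ℝ × ℝ × (ι → ℝ) →ᵃ[ℝ] ℝ := AffineMap.fst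
  let ℓ : ℝ × ℝ × ℝ × (ι → ℝ) →ᵃ[ℝ] ℝ := AffineMap.fst.comp AffineMap.snd
  let w : ℝ × ℝ × ℝ × (ι → ℝ) →ᵃ[ℝ] ℝ := AffineMap.fst.comp (AffineMap.snd.comp AffineMap.snd)
  let ν (p : ι) : ℝ × ℝ × ℝ × (ι → ℝ) →ᵃ[ℝ] ℝ :=
    (LinearMap.proj p : (ι → ℝ) →ₗ[ℝ] ℝ).toAffineMap.comp
      (AffineMap.snd.comp (AffineMap.snd.comp AffineMap.snd))
  have feasible_path (p : ι) :=
    convex_setOf_path_feasible c ω (θ p) (φ p) (ρ p) x₀ y₀ d₁ ℓ w (ν p)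
  simp only [pathOrigin_apply] at feasible_path
  rw [Set.ofPred_forall]
  exact convex_iInter feasible_path

/-- Convexity of the feasible set of the box-minimization problem with fixed
orientation `ω` (paper's problem (E7)): the tuples `(d₁, ℓ, w, ν)` such that,
for every path `p`, `0 < ν_p < d₁ + c·ρ_p` and the two `ω`-rotated coordinates
of the `p`-th path origin relative to `(x₀, y₀)` are bounded by `ℓ/2` and
`w/2` respectively, form a convex set. -/
theorem boxMin_feasibleSet_convex (P : ℕ) (θ φ ρ : Fin P → ℝ)
    (ω c x₀ y₀ : ℝ) (hc : 0 < c) :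
    Convex ℝ { t : ℝ × ℝ × ℝ × (Fin P → ℝ) |
      ∀ p : Fin P,
        0 < t.2.2.2 p ∧ t.2.2.2 p < t.1 + c * ρ p ∧
        |Real.cos ω * (pathX c ω (θ p) (φ p) (ρ p) (t.2.2.2 p) t.1 - x₀) +
            Real.sin ω * (pathY c ω (θ p) (φ p) (ρ p) (t.2.2.2 p) t.1 - y₀)|
          ≤ t.2.1 / 2 ∧
        |-Real.sin ω * (pathX c ω (θ p) (φ p) (ρ p) (t.2.2.2 p) t.1 - x₀) +
            Real.cos ω * (pathY c ω (θ p) (φ p) (ρ p) (t.2.2.2 p) t.1 - y₀)|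
          ≤ t.2.2.1 / 2 } :=
  boxMin_feasibleSet_convex_general θ φ ρ ω c x₀ y₀
end

section
/- Let P ≥ 1 and for each p ∈ {1,…,P} let u_p = (cos θ_p, sin θ_p) and w_p = (cos(φ_p + ω), sin(φ_p + ω)) be unit vectors in ℝ² that are linearly independent, and let v_p ∈ ℝ² (the displacement of the p-th path origin from the disk center). Suppose r > 0 and there are multipliers γ_p ≥ 0 satisfying: (i) Σ_p γ_p > 0; (ii) for every p, ‖v_p‖² ≤ r²; (iii) complementary slackness: γ_p·(‖v_p‖² − r²) = 0 for every p; (iv) stationarity in each ν_p: γ_p·⟨v_p, u_p + w_p⟩ = 0 for every p; (v) stationarity in d₁: Σ_p γ_p·⟨v_p, w_p⟩ = 0. Then there exist two distinct indices p₁ ≠ p₂ with ‖v_{p₁}‖² = r² and ‖v_{p₂}‖² = r², i.e., at least two path origins lie on the boundary of the minimized disk. -/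
/-!
A nonzero vector in the span of `u` and `w` that is orthogonal to `u + w` cannot also be orthogonal
to `w`. So a path with a nonzero multiplier, whose displacement is nonzero by complementary
slackness, contributes a nonzero term to the stationarity sum in `d₁`. That sum vanishes, hence some
other path contributes a nonzero term as well, and its constraint is active too.
-/

open WithLp (toLp)
open scoped RealInnerProductSpace

theorem exists_mem_ne_and_ne_zero_of_sum_eq_zero {ι M : Type*} [AddCommMonoid M] {s : Finset ι}
    {f : ι → M} (hsum : ∑ j ∈ s, f j = 0) {i : ι} (hi : i ∈ s) (hfi : f i ≠ 0) :
    ∃ j ∈ s, j ≠ i ∧ f j ≠ 0 := by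
  by_contra! hzero
  exact hfi ((Finset.sum_eq_single_of_mem i hi hzero).symm.trans hsum)

section InnerProduct

variable {𝕜 E : Type*} [RCLike 𝕜] [NormedAddCommGroup E] [InnerProductSpace 𝕜 E]

theorem eq_zero_of_mem_span_of_forall_inner_eq_zero {s : Set E} {v : E}
    (hv : v ∈ Submodule.span 𝕜 s) (hs : ∀ x ∈ s, inner 𝕜 v x = 0) : v = 0 := by
  have hortho : Submodule.span 𝕜 {v} ⟂ Submodule.span 𝕜 s := by
    simpa [Submodule.isOrtho_span] using hs
  exact inner_self_eq_zero.mp (hortho.inner_eq (Submodule.mem_span_singleton_self v) hv)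

theorem inner_ne_zero_of_inner_add_eq_zero {u w v : E} (hv : v ∈ Submodule.span 𝕜 {u, w})
    (hv₀ : v ≠ 0) (hadd : inner 𝕜 v (u + w) = 0) : inner 𝕜 v w ≠ 0 := by
  intro hw
  have hu : inner 𝕜 v u = 0 := by simpa [inner_add_right, hw] using hadd
  exact hv₀ (eq_zero_of_mem_span_of_forall_inner_eq_zero hv (by simp [hu, hw]))

end InnerProduct

theorem span_pair_eq_top_of_finrank_eq_two {K V : Type*} [DivisionRing K] [AddCommGroup V]
    [Module K V] {x y : V} (hxy : LinearIndependent K ![x, y]) (hV : Module.finrank K V = 2) :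
    Submodule.span K {x, y} = ⊤ := by
  rw [← Matrix.range_cons_cons_empty x y ![]]
  exact hxy.span_eq_top_of_card_eq_finrank (by simp [hV])

theorem toLp_mem_span_pair {x y : ℝ × ℝ} (hxy : LinearIndependent ℝ ![x, y]) (z : ℝ × ℝ) :
    toLp 2 z ∈ Submodule.span ℝ {toLp 2 x, toLp 2 y} := by
  have hz : z ∈ Submodule.span ℝ {x, y} := by
    simp [span_pair_eq_top_of_finrank_eq_two hxy]
  simpa [Submodule.map_span, Set.image_pair] using
    Submodule.mem_map_of_mem (f := (WithLp.linearEquiv 2 ℝ (ℝ × ℝ)).symm.toLinearMap) hz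

theorem real_inner_toLp (x y : ℝ × ℝ) : ⟪toLp 2 x, toLp 2 y⟫ = x.1 * y.1 + x.2 * y.2 := by
  simp [mul_comm]

theorem norm_sq_toLp (x : ℝ × ℝ) : ‖toLp 2 x‖ ^ 2 = x.1 ^ 2 + x.2 ^ 2 := by
  simp [WithLp.prod_norm_sq_eq_of_L2]

theorem diskMin_two_boundary_paths_general {ι E : Type*} [Fintype ι] [NormedAddCommGroup E]
    [InnerProductSpace ℝ E] {u w v : ι → E} {r : ℝ} {γ : ι → ℝ}
    (hspan : ∀ p, v p ∈ Submodule.span ℝ {u p, w p}) (hr : r ≠ 0) (hγ : γ ≠ 0)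
    (hcs : ∀ p, γ p * (‖v p‖ ^ 2 - r ^ 2) = 0)
    (hstat_ν : ∀ p, γ p * ⟪v p, u p + w p⟫ = 0)
    (hstat_d : ∑ p, γ p * ⟪v p, w p⟫ = 0) :
    ∃ p₁ p₂, p₁ ≠ p₂ ∧ ‖v p₁‖ ^ 2 = r ^ 2 ∧ ‖v p₂‖ ^ 2 = r ^ 2 := by
  have hactive (p : ι) (hp : γ p ≠ 0) : ‖v p‖ ^ 2 = r ^ 2 :=
    sub_eq_zero.mp ((mul_eq_zero.mp (hcs p)).resolve_left hp)
  obtain ⟨p, hp⟩ : ∃ p, γ p ≠ 0 := Function.ne_iff.mp hγ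
  have hvp : v p ≠ 0 := fun h => hr (by simpa [h] using (hactive p hp).symm)
  have hterm : γ p * ⟪v p, w p⟫ ≠ 0 :=
    mul_ne_zero hp <| inner_ne_zero_of_inner_add_eq_zero (hspan p) hvp <|
      (mul_eq_zero.mp (hstat_ν p)).resolve_left hp
  obtain ⟨q, -, hqp, hq⟩ :=
    exists_mem_ne_and_ne_zero_of_sum_eq_zero hstat_d (Finset.mem_univ p) hterm
  exact ⟨q, p, hqp, hactive q (left_ne_zero_of_mul hq), hactive p hp⟩

/-- Paper's Proposition 6 (HV size sensing by disk minimization), via the KKT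
conditions of problem (E6): with unit direction vectors
`u_p = (cos θ_p, sin θ_p)` and `w_p = (cos(φ_p + ω), sin(φ_p + ω))` linearly
independent for each path, displacements `v_p` of the path origins from the
disk center, radius `r > 0`, and nonnegative multipliers `γ_p` (not all zero)
satisfying primal feasibility, complementary slackness, and the stationarity
conditions in each `ν_p` and in `d₁`, at least two distinct path origins lie
on the boundary of the minimized disk. -/
theorem diskMin_two_boundary_paths (P : ℕ) (hP : 1 ≤ P)
    (θ φ : Fin P → ℝ) (ω : ℝ) (u w v : Fin P → ℝ × ℝ)
    (hu : ∀ p, u p = (Real.cos (θ p), Real.sin (θ p)))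
    (hw : ∀ p, w p = (Real.cos (φ p + ω), Real.sin (φ p + ω)))
    (hind : ∀ p, LinearIndependent ℝ ![u p, w p])
    (r : ℝ) (hr : 0 < r)
    (γ : Fin P → ℝ) (hγ : ∀ p, 0 ≤ γ p)
    (hpos : 0 < ∑ p, γ p)
    (hfeas : ∀ p, (v p).1 ^ 2 + (v p).2 ^ 2 ≤ r ^ 2)
    (hcs : ∀ p, γ p * ((v p).1 ^ 2 + (v p).2 ^ 2 - r ^ 2) = 0)
    (hstat_ν : ∀ p, γ p *
        ((v p).1 * ((u p).1 + (w p).1) + (v p).2 * ((u p).2 + (w p).2)) = 0)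
    (hstat_d : ∑ p, γ p * ((v p).1 * (w p).1 + (v p).2 * (w p).2) = 0) :
    ∃ p₁ p₂ : Fin P, p₁ ≠ p₂ ∧
      (v p₁).1 ^ 2 + (v p₁).2 ^ 2 = r ^ 2 ∧
      (v p₂).1 ^ 2 + (v p₂).2 ^ 2 = r ^ 2 := by
  simpa only [norm_sq_toLp] using diskMin_two_boundary_paths_general
    (fun p => toLp_mem_span_pair (hind p) (v p)) hr.ne' (γ := γ) (by rintro rfl; simp at hpos)
    (by simpa only [norm_sq_toLp] using hcs)
    (by simpa only [← WithLp.toLp_add, real_inner_toLp, Prod.fst_add, Prod.snd_add] using hstat_ν)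
    (by simpa only [real_inner_toLp] using hstat_d)
end
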